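/- For every integer k ≥ 3, one has L_{2k} ≥ 2 · L_k, where the inequality and product are taken in the extended nonnegative reals [0, +∞]. -/

import Mathlib

open Filter Topology
open scoped ENNReal

/-- `N` has the Ramsey property for the tuple `k`: every `r`-coloring of the
edges of the complete graph on `N` vertices admits a color `i` and a set of
`k i` vertices all of whose connecting edges have color `i`. -/
def ramseyProp {r : ℕ} (k : Fin r → ℕ) (N : ℕ) : Prop :=
  ∀ c : Sym2 (Fin N) → Fin r, ∃ i : Fin r, ∃ S : Finset (Fin N),
    S.card = k i ∧ ∀ u ∈ S, ∀ v ∈ S, u ≠ v → c s(u, v) = i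

/-- The multicolor Ramsey number `R(k 0, …, k (r-1))`: the least positive `N`
with the Ramsey property. -/
noncomputable def multiRamsey {r : ℕ} (k : Fin r → ℕ) : ℕ :=
  sInf {N | 0 < N ∧ ramseyProp k N}

/-- The diagonal multicolor Ramsey number `R_r(k)`. -/
noncomputable def diagRamsey (r k : ℕ) : ℕ :=
  multiRamsey (fun _ : Fin r => k)

/-- DC, the "decreasing conjecture". -/
def DC : Prop :=
  ∀ (r : ℕ), 2 ≤ r → ∀ k : Fin r → ℕ, (∀ l, 2 ≤ k l) →
    ∀ i j : Fin r, i ≠ j → 3 ≤ k i → k i ≤ k j →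
      multiRamsey (fun l => if l = i then k i - 1 else if l = j then k j + 1 else k l)
        ≤ multiRamsey k

/-- Ramsey's theorem for finitely many colors, for subsets of an arbitrary vertex type. -/
theorem exists_forall_card_le_exists_monochromatic {α : Type*} [DecidableEq α] {r : ℕ}
    (k : Fin r → ℕ) :
    ∃ N : ℕ, ∀ c : Sym2 α → Fin r, ∀ S : Finset α, N ≤ S.card →
      ∃ i, ∃ T ⊆ S, T.card = k i ∧ ∀ u ∈ T, ∀ v ∈ T, u ≠ v → c s(u, v) = i := by
  induction hn : ∑ i, k i generalizing k with
  | zero =>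
    refine ⟨1, fun c S hS => ?_⟩
    obtain ⟨x, -⟩ := Finset.card_pos.mp hS
    refine ⟨c s(x, x), ∅, by simp, ?_, by simp⟩
    simpa using ((Finset.sum_eq_zero_iff.mp hn) (c s(x, x)) (Finset.mem_univ _)).symm
  | succ n ih =>
    by_cases h0 : ∃ i, k i = 0
    · obtain ⟨i, hi⟩ := h0
      exact ⟨0, fun c S _ => ⟨i, ∅, by simp, by simp [hi], by simp⟩⟩
    push Not at h0
    have hpred (i : Fin r) : ∑ j, Function.update k i (k i - 1) j = n := by
      have h1 := Finset.add_sum_erase Finset.univ k (Finset.mem_univ i)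
      rw [Finset.sum_update_of_mem (Finset.mem_univ i), ← Finset.erase_eq]
      have := h0 i
      omega
    choose N hN using fun i => ih (Function.update k i (k i - 1)) (hpred i)
    refine ⟨1 + ∑ i, N i, fun c S hS => ?_⟩
    obtain ⟨x, hx⟩ := Finset.card_pos.mp (show 0 < S.card by omega)
    have hsum : ∑ i, ((S.erase x).filter fun y => c s(x, y) = i).card = S.card - 1 := by
      rw [← Finset.card_erase_of_mem hx]
      exact (Finset.card_eq_sum_card_fiberwise fun _ _ => Finset.mem_coe.2 (Finset.mem_univ _)).symm
    obtain ⟨i, hi⟩ : ∃ i, N i ≤ ((S.erase x).filter fun y => c s(x, y) = i).card := by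
      by_contra! hlt
      have hlt_sum := Finset.sum_lt_sum_of_nonempty ⟨c s(x, x), Finset.mem_univ _⟩
        fun i (_ : i ∈ Finset.univ) => hlt i
      omega
    obtain ⟨j, T, hTS, hTc, hT⟩ := hN i c _ hi
    have hTS' : T ⊆ S := fun y hy =>
      Finset.mem_of_mem_erase (Finset.mem_of_mem_filter y (hTS hy))
    by_cases hji : j = i
    · subst hji
      have hxT : x ∉ T := fun h => by simpa using hTS h
      have hcol (y : α) (hy : y ∈ T) : c s(x, y) = j := (Finset.mem_filter.mp (hTS hy)).2
      refine ⟨j, insert x T, Finset.insert_subset hx hTS', ?_, ?_⟩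
      · rw [Finset.card_insert_of_notMem hxT, hTc, Function.update_self]
        have := h0 j
        omega
      · intro u hu v hv huv
        rcases Finset.mem_insert.mp hu with rfl | huT <;>
          rcases Finset.mem_insert.mp hv with rfl | hvT
        · exact absurd rfl huv
        · exact hcol v hvT
        · rw [Sym2.eq_swap]; exact hcol u huT
        · exact hT u huT v hvT huv
    · exact ⟨j, T, hTS', by rw [hTc, Function.update_of_ne hji], hT⟩

theorem multiRamsey_spec {r : ℕ} (k : Fin r → ℕ) :
    0 < multiRamsey k ∧ ramseyProp k (multiRamsey k) := by
  refine Nat.sInf_mem (s := {N | 0 < N ∧ ramseyProp k N}) ?_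
  obtain ⟨N, hN⟩ := exists_forall_card_le_exists_monochromatic (α := ℕ) k
  refine ⟨N + 1, by omega, fun c => ?_⟩
  obtain ⟨i, T, hTS, hTc, hT⟩ := hN (fun e => c (e.map (Fin.ofNat (N + 1))))
    (Finset.range (N + 1)) (by simp)
  have hinj : Set.InjOn (Fin.ofNat (N + 1)) (T : Set ℕ) := by
    intro a ha b hb hab
    have ha' := Finset.mem_range.mp (hTS ha)
    have hb' := Finset.mem_range.mp (hTS hb)
    simpa [Fin.ext_iff, Fin.ofNat, Nat.mod_eq_of_lt ha', Nat.mod_eq_of_lt hb'] using hab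
  refine ⟨i, T.image (Fin.ofNat (N + 1)), by rw [Finset.card_image_of_injOn hinj, hTc], ?_⟩
  intro u hu v hv huv
  obtain ⟨a, ha, rfl⟩ := Finset.mem_image.mp hu
  obtain ⟨b, hb, rfl⟩ := Finset.mem_image.mp hv
  exact hT a ha b hb (fun h => huv (h ▸ rfl))

theorem not_ramseyProp_of_lt_multiRamsey {r : ℕ} {k : Fin r → ℕ} {n : ℕ} (h0 : 0 < n)
    (hn : n < multiRamsey k) : ¬ ramseyProp k n :=
  fun h => Nat.notMem_of_lt_sInf hn ⟨h0, h⟩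

/-- Blowing up a coloring without monochromatic `k`-cliques by the `r`-dimensional cube, whose edges
are colored by a coordinate in which their endpoints differ, at most doubles the clique sizes. -/
theorem two_pow_mul_lt_diagRamsey (r k : ℕ) :
    2 ^ r * (diagRamsey r k - 1) < diagRamsey r (2 * k) := by
  by_contra! hle
  obtain ⟨hpos, hram⟩ := multiRamsey_spec (fun _ : Fin r => 2 * k)
  change 0 < diagRamsey r (2 * k) at hpos
  change ramseyProp _ (diagRamsey r (2 * k)) at hram
  set M := diagRamsey r (2 * k)
  set n := diagRamsey r k - 1 with hn
  have hn0 : 0 < n := Nat.pos_of_ne_zero fun h => by simp [h] at hle; omega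
  refine not_ramseyProp_of_lt_multiRamsey (k := fun _ : Fin r => k) hn0
    (show n < diagRamsey r k by omega) fun χ => ?_
  obtain ⟨f⟩ : Nonempty (Fin M ↪ (Fin r → Bool) × Fin n) :=
    Function.Embedding.nonempty_of_card_le (by simpa using hle)
  have hcol (e : Sym2 (Fin M)) : ∃ i, ∀ u v, e = s(u, v) →
      ((f u).1 ≠ (f v).1 → (f u).1 i ≠ (f v).1 i) ∧
      ((f u).1 = (f v).1 → χ s((f u).2, (f v).2) = i) := by
    induction e with | _ a b
    by_cases hab : (f a).1 = (f b).1
    · refine ⟨χ s((f a).2, (f b).2), fun u v huv => ?_⟩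
      rcases Sym2.eq_iff.mp huv with ⟨rfl, rfl⟩ | ⟨rfl, rfl⟩
      · exact ⟨fun h => absurd hab h, fun _ => rfl⟩
      · exact ⟨fun h => absurd hab.symm h, fun _ => by rw [Sym2.eq_swap]⟩
    · obtain ⟨i, hi⟩ := Function.ne_iff.mp hab
      refine ⟨i, fun u v huv => ?_⟩
      rcases Sym2.eq_iff.mp huv with ⟨rfl, rfl⟩ | ⟨rfl, rfl⟩
      · exact ⟨fun _ => hi, fun h => absurd h hab⟩
      · exact ⟨fun _ => hi.symm, fun h => absurd h.symm hab⟩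
  choose c hc using hcol
  obtain ⟨i, S, hS, hmono⟩ := hram c
  beta_reduce at hS
  obtain ⟨b, hb⟩ : ∃ b, k ≤ (S.filter fun u => (f u).1 i = b).card := by
    by_contra! hlt
    have hsum := Finset.card_eq_sum_card_fiberwise (s := S) (t := Finset.univ)
      (f := fun u => (f u).1 i) fun _ _ => Finset.mem_coe.2 (Finset.mem_univ _)
    rw [Fintype.sum_bool] at hsum
    have := hlt true
    have := hlt false
    omega
  obtain ⟨T, hTS, hT⟩ := Finset.exists_subset_card_eq hb
  have hsame (u : Fin M) (hu : u ∈ T) (v : Fin M) (hv : v ∈ T) (huv : u ≠ v) :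
      (f u).1 = (f v).1 ∧ χ s((f u).2, (f v).2) = i := by
    obtain ⟨huS, hub⟩ := Finset.mem_filter.mp (hTS hu)
    obtain ⟨hvS, hvb⟩ := Finset.mem_filter.mp (hTS hv)
    obtain ⟨hne, heq⟩ := hc s(u, v) u v rfl
    rw [hmono u huS v hvS huv] at hne heq
    have h1 : (f u).1 = (f v).1 := by
      by_contra h
      exact hne h (hub.trans hvb.symm)
    exact ⟨h1, heq h1⟩
  have hinj : Set.InjOn (fun u => (f u).2) (T : Set (Fin M)) := by
    intro u hu v hv huv
    by_contra h
    exact h (f.injective (Prod.ext (hsame u hu v hv h).1 huv))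
  refine ⟨i, T.image fun u => (f u).2, by rw [Finset.card_image_of_injOn hinj, hT], ?_⟩
  intro x hx y hy hxy
  obtain ⟨u, hu, rfl⟩ := Finset.mem_image.mp hx
  obtain ⟨v, hv, rfl⟩ := Finset.mem_image.mp hy
  exact (hsame u hu v hv (fun h => hxy (h ▸ rfl))).2

theorem two_le_diagRamsey {r k : ℕ} (hr : 0 < r) (hk : 2 ≤ k) : 2 ≤ diagRamsey r k := by
  obtain ⟨-, hram⟩ := multiRamsey_spec (fun _ : Fin r => k)
  change ramseyProp _ (diagRamsey r k) at hram
  obtain ⟨_, S, hS, -⟩ := hram fun _ => ⟨0, hr⟩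
  have := S.card_le_univ
  rw [Fintype.card_fin, hS] at this
  exact hk.trans this

/-- `L_{2k} ≥ 2 · L_k` in `[0, ∞]` for every `k ≥ 3`,
where `L j` is the limit of `r ↦ R_r(j)^{1/r}` in `[0, ∞]`. -/
theorem stmt11 (L : ℕ → ℝ≥0∞)
    (hL : ∀ j, 2 ≤ j →
      Tendsto (fun r : ℕ => ((diagRamsey r j : ℝ≥0∞)) ^ (1 / (r : ℝ))) atTop (𝓝 (L j)))
    (k : ℕ) (hk : 3 ≤ k) :
    2 * L k ≤ L (2 * k) := by
  have hbound : ∀ᶠ r : ℕ in atTop,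
      2 * (diagRamsey r k : ℝ≥0∞) ^ (1 / (r : ℝ)) ≤
        (2 : ℝ≥0∞) ^ (1 / (r : ℝ)) * (diagRamsey r (2 * k) : ℝ≥0∞) ^ (1 / (r : ℝ)) := by
    filter_upwards [eventually_gt_atTop 0] with r hr
    have hnat : 2 ^ r * diagRamsey r k ≤ 2 * diagRamsey r (2 * k) := by
      have h2 := two_le_diagRamsey hr (show 2 ≤ k by omega)
      calc 2 ^ r * diagRamsey r k ≤ 2 ^ r * (2 * (diagRamsey r k - 1)) := by gcongr; omega
        _ = 2 * (2 ^ r * (diagRamsey r k - 1)) := by ring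
        _ ≤ 2 * diagRamsey r (2 * k) := by gcongr; exact (two_pow_mul_lt_diagRamsey r k).le
    have hcast : (2 : ℝ≥0∞) ^ r * (diagRamsey r k : ℝ≥0∞) ≤ 2 * (diagRamsey r (2 * k) : ℝ≥0∞) := by
      exact_mod_cast hnat
    have hexp : (0 : ℝ) ≤ 1 / (r : ℝ) := by positivity
    have hroot := ENNReal.rpow_le_rpow hcast hexp
    rwa [ENNReal.mul_rpow_of_nonneg _ _ hexp, ENNReal.mul_rpow_of_nonneg _ _ hexp, one_div,
      ENNReal.pow_rpow_inv_natCast hr.ne', ← one_div] at hroot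
  have hone : Tendsto (fun r : ℕ => (2 : ℝ≥0∞) ^ (1 / (r : ℝ))) atTop (𝓝 1) := by
    have h := ENNReal.tendsto_ofReal <|
      ((Real.continuous_const_rpow (two_ne_zero (α := ℝ))).tendsto 0).comp
        (tendsto_one_div_atTop_nhds_zero_nat (𝕜 := ℝ))
    simpa [← ENNReal.ofReal_rpow_of_pos] using h
  have hright := ENNReal.Tendsto.mul hone (Or.inl one_ne_zero) (hL (2 * k) (by omega))
    (Or.inr ENNReal.one_ne_top)
  rw [one_mul] at hright
  exact le_of_tendsto_of_tendsto
    (ENNReal.Tendsto.const_mul (hL k (by omega)) (Or.inr ENNReal.ofNat_ne_top)) hright hbound
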